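/- (General Carleman inequality for the backward heat operator.) Let d, m ≥ 1 be integers and t₁ < t₂ reals. Let u : [t₁,t₂] × ℝ^d → ℝ^m be smooth with support contained in [t₁,t₂] × K for some compact set K ⊂ ℝ^d, and let g : [t₁,t₂] × ℝ^d → ℝ be smooth. Set F := ∂ₜg − Δg − |∇g|² and let L := ∂ₜ + Δ act componentwise (Δ and ∇ in the space variables). Then ∫_{t₁}^{t₂}∫_{ℝ^d} ( (1/2)(LF)|u|² + 2 Hess_g(∇u,∇u) ) e^g dx dt ≤ (1/2)∫_{t₁}^{t₂}∫_{ℝ^d} |Lu|² e^g dx dt + [ ∫_{ℝ^d} ( |∇u|² + (1/2)F|u|² ) e^g dx ]_{t=t₁}^{t=t₂}, where Hess_g(∇u,∇u) := Σ_{i,j=1}^{d} Σ_{k=1}^{m} (∂_i∂_j g)(∂_i u_k)(∂_j u_k), |∇u|² := Σ_{i,k} (∂_i u_k)², and [H(t)]_{t=t₁}^{t=t₂} := H(t₂) − H(t₁). -/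

import Mathlib

noncomputable section

open MeasureTheory Real Set

/-- Spatial partial derivative in the `i`-th coordinate direction. -/
def pdg {d : ℕ} (i : Fin d) (f : EuclideanSpace ℝ (Fin d) → ℝ)
    (x : EuclideanSpace ℝ (Fin d)) : ℝ :=
  fderiv ℝ f x (EuclideanSpace.single i 1)

/-- Spatial Laplacian. -/
def lapg {d : ℕ} (f : EuclideanSpace ℝ (Fin d) → ℝ) (x : EuclideanSpace ℝ (Fin d)) : ℝ :=
  ∑ i, pdg i (pdg i f) x

/-- Time derivative. -/
def tdg {d : ℕ} (f : ℝ → EuclideanSpace ℝ (Fin d) → ℝ) (t : ℝ)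
    (x : EuclideanSpace ℝ (Fin d)) : ℝ :=
  deriv (fun s => f s x) t

/-- The backward heat operator `L = ∂ₜ + Δ` acting on scalar functions. -/
def bheat {d : ℕ} (f : ℝ → EuclideanSpace ℝ (Fin d) → ℝ) (t : ℝ)
    (x : EuclideanSpace ℝ (Fin d)) : ℝ :=
  tdg f t x + lapg (f t) x

/-!
For the weight `e^g dx dt` the backward heat operator `L = ∂ₜ + Δ` splits as `L = S + A`, with `S`
symmetric and skew part `A w = ∂ₜw + ½Fw - ∇g · ∇w` up to boundary terms in time. Discarding the
square in `½|Lw|² = 2 (Sw)(Aw) + ½|Lw - 2Aw|²` leaves `2⟨Sw, Aw⟩`, which is the commutator term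
`⟨[S, A]w, w⟩` plus boundary terms, and `[S, A]` produces exactly the `Hess_g` and `LF` terms.

The integrations by parts are carried out pointwise: `2 (Sw)(Aw) e^g` equals the commutator density
minus the time derivative of the energy density plus a spatial divergence, and the divergence
integrates to zero because `u` has compact support in space.
-/

open scoped Topology

section DirectionalCalculus

variable {Z : Type*} [NormedAddCommGroup Z] [NormedSpace ℝ Z] {v w z : Z} {a b f : Z → ℝ}

/-- The derivative of `f` in the fixed direction `v`, as a function, so that such derivatives can
be iterated. It is `0` where `f` is not differentiable. -/
def dirDeriv (v : Z) (f : Z → ℝ) (z : Z) : ℝ :=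
  fderiv ℝ f z v

lemma contDiff_dirDeriv {n : WithTop ℕ∞} (hf : ContDiff ℝ (n + 1) f) (v : Z) :
    ContDiff ℝ n (dirDeriv v f) :=
  (hf.fderiv_right le_rfl).clm_apply contDiff_const

@[fun_prop]
lemma contDiff_one_dirDeriv (hf : ContDiff ℝ 2 f) : ContDiff ℝ 1 (dirDeriv v f) :=
  contDiff_dirDeriv (by rwa [one_add_one_eq_two]) v

@[fun_prop]
lemma continuous_dirDeriv (hf : ContDiff ℝ 1 f) : Continuous (dirDeriv v f) :=
  (contDiff_dirDeriv (n := 0) (by rwa [zero_add]) v).continuous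

@[fun_prop]
lemma differentiable_dirDeriv (hf : ContDiff ℝ 2 f) : Differentiable ℝ (dirDeriv v f) :=
  (contDiff_one_dirDeriv hf).differentiable one_ne_zero

lemma dirDeriv_comm (hf : ContDiff ℝ 2 f) (v w z : Z) :
    dirDeriv v (dirDeriv w f) z = dirDeriv w (dirDeriv v f) z := by
  have hdf : DifferentiableAt ℝ (fderiv ℝ f) z :=
    (hf.fderiv_right (m := 1) one_add_one_eq_two.le).differentiable one_ne_zero z
  have iterated (v w : Z) : dirDeriv v (dirDeriv w f) z = fderiv ℝ (fderiv ℝ f) z v w := by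
    change fderiv ℝ (fun y => fderiv ℝ f y w) z v = _
    simp [fderiv_clm_apply hdf (differentiableAt_const w)]
  rw [iterated, iterated]
  exact hf.contDiffAt.isSymmSndFDerivAt (by simp) v w

lemma dirDeriv_add (ha : DifferentiableAt ℝ a z) (hb : DifferentiableAt ℝ b z) :
    dirDeriv v (fun y => a y + b y) z = dirDeriv v a z + dirDeriv v b z := by
  simp [dirDeriv, fderiv_fun_add ha hb]

lemma dirDeriv_sub (ha : DifferentiableAt ℝ a z) (hb : DifferentiableAt ℝ b z) :
    dirDeriv v (fun y => a y - b y) z = dirDeriv v a z - dirDeriv v b z := by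
  simp [dirDeriv, fderiv_fun_sub ha hb]

lemma dirDeriv_sum {ι : Type*} {s : Finset ι} {a : ι → Z → ℝ}
    (ha : ∀ i ∈ s, DifferentiableAt ℝ (a i) z) :
    dirDeriv v (fun y => ∑ i ∈ s, a i y) z = ∑ i ∈ s, dirDeriv v (a i) z := by
  simp [dirDeriv, fderiv_fun_sum ha]

lemma dirDeriv_const_mul (c : ℝ) (ha : DifferentiableAt ℝ a z) :
    dirDeriv v (fun y => c * a y) z = c * dirDeriv v a z := by
  simp [dirDeriv, fderiv_const_mul ha]

lemma dirDeriv_mul (ha : DifferentiableAt ℝ a z) (hb : DifferentiableAt ℝ b z) :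
    dirDeriv v (fun y => a y * b y) z = dirDeriv v a z * b z + a z * dirDeriv v b z := by
  simp only [dirDeriv, fderiv_fun_mul ha hb, add_apply, smul_apply, smul_eq_mul]
  ring

lemma dirDeriv_sq (ha : DifferentiableAt ℝ a z) :
    dirDeriv v (fun y => a y ^ 2) z = 2 * a z * dirDeriv v a z := by
  simp_rw [pow_two, dirDeriv_mul ha ha]
  ring

lemma dirDeriv_exp (ha : DifferentiableAt ℝ a z) :
    dirDeriv v (fun y => exp (a y)) z = exp (a z) * dirDeriv v a z := by
  simp [dirDeriv, fderiv_exp ha]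

lemma dirDeriv_eventuallyEq_zero (hf : f =ᶠ[𝓝 z] 0) (v : Z) : dirDeriv v f =ᶠ[𝓝 z] 0 := by
  filter_upwards [hf.fderiv (𝕜 := ℝ)] with y hy
  simp [dirDeriv, hy]

end DirectionalCalculus

section GradientForms

variable {Z : Type*} [NormedAddCommGroup Z] [NormedSpace ℝ Z] {ι : Type*} [Fintype ι]
  {e : ι → Z} {z : Z} {a b c g : Z → ℝ}

/-- The carré du champ `∇a · ∇b = ∑ i, ∂ᵢa ∂ᵢb`, the gradients being taken in the directions
`e i` only. -/
def gradInner (e : ι → Z) (a b : Z → ℝ) (z : Z) : ℝ :=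
  ∑ i, dirDeriv (e i) a z * dirDeriv (e i) b z

/-- The Laplacian `∑ i, ∂ᵢ∂ᵢf` in the directions `e i`. -/
def laplace (e : ι → Z) (f : Z → ℝ) (z : Z) : ℝ :=
  ∑ i, dirDeriv (e i) (dirDeriv (e i) f) z

/-- The Hessian of `g` in the directions `e i`, evaluated on the gradients of `a` and `b`. -/
def hessForm (e : ι → Z) (g a b : Z → ℝ) (z : Z) : ℝ :=
  ∑ i, ∑ j, dirDeriv (e i) (dirDeriv (e j) g) z * dirDeriv (e i) a z * dirDeriv (e j) b z

@[fun_prop]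
lemma contDiff_one_gradInner (ha : ContDiff ℝ 2 a) (hb : ContDiff ℝ 2 b) :
    ContDiff ℝ 1 (gradInner e a b) := by
  unfold gradInner
  fun_prop

@[fun_prop]
lemma differentiable_gradInner (ha : ContDiff ℝ 2 a) (hb : ContDiff ℝ 2 b) :
    Differentiable ℝ (gradInner e a b) :=
  (contDiff_one_gradInner ha hb).differentiable one_ne_zero

@[fun_prop]
lemma continuous_laplace (ha : ContDiff ℝ 2 a) : Continuous (laplace e a) := by
  unfold laplace
  fun_prop

@[fun_prop]
lemma continuous_hessForm (hg : ContDiff ℝ 2 g) (ha : ContDiff ℝ 1 a) (hb : ContDiff ℝ 1 b) :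
    Continuous (hessForm e g a b) := by
  unfold hessForm
  fun_prop

lemma gradInner_comm (a b : Z → ℝ) (z : Z) : gradInner e a b z = gradInner e b a z := by
  simp only [gradInner, mul_comm]

/-- Lets `gradInner e · b z` inherit the calculus rules for `dirDeriv`. -/
lemma gradInner_eq_dirDeriv (a b : Z → ℝ) (z : Z) :
    gradInner e a b z = dirDeriv (∑ i, dirDeriv (e i) b z • e i) a z := by
  simp [gradInner, dirDeriv, mul_comm]

lemma hessForm_comm (hg : ContDiff ℝ 2 g) (a b : Z → ℝ) (z : Z) :
    hessForm e g a b z = hessForm e g b a z := by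
  unfold hessForm
  rw [Finset.sum_comm]
  refine Finset.sum_congr rfl fun i _ => Finset.sum_congr rfl fun j _ => ?_
  rw [dirDeriv_comm hg]
  ring

lemma dirDeriv_gradInner (ha : ContDiff ℝ 2 a) (hb : ContDiff ℝ 2 b) (v z : Z) :
    dirDeriv v (gradInner e a b) z
      = gradInner e (dirDeriv v a) b z + gradInner e a (dirDeriv v b) z := by
  unfold gradInner
  rw [dirDeriv_sum fun i _ => by fun_prop, ← Finset.sum_add_distrib]
  refine Finset.sum_congr rfl fun i _ => ?_
  rw [dirDeriv_mul (by fun_prop) (by fun_prop), dirDeriv_comm ha, dirDeriv_comm hb]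

lemma gradInner_gradInner (ha : ContDiff ℝ 2 a) (hb : ContDiff ℝ 2 b) (c : Z → ℝ) (z : Z) :
    gradInner e (gradInner e a b) c z = hessForm e a c b z + hessForm e b c a z := by
  rw [gradInner]
  simp only [dirDeriv_gradInner ha hb, gradInner, hessForm, ← Finset.sum_add_distrib,
    Finset.sum_mul]
  refine Finset.sum_congr rfl fun i _ => Finset.sum_congr rfl fun j _ => ?_
  rw [dirDeriv_comm ha, dirDeriv_comm hb]
  ring

lemma sum_dirDeriv_exp_mul_grad (hg : DifferentiableAt ℝ g z) (ha : DifferentiableAt ℝ a z)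
    (hb : ContDiff ℝ 2 b) :
    ∑ i, dirDeriv (e i) (fun y => exp (g y) * (a y * dirDeriv (e i) b y)) z
      = exp (g z) * (gradInner e a b z + a z * (laplace e b z + gradInner e g b z)) := by
  simp only [gradInner, laplace, Finset.mul_sum, mul_add, ← Finset.sum_add_distrib]
  refine Finset.sum_congr rfl fun i _ => ?_
  rw [dirDeriv_mul (by fun_prop) (by fun_prop), dirDeriv_exp hg,
    dirDeriv_mul ha (by fun_prop)]
  ring

end GradientForms

section CarlemanIdentity

variable {Z : Type*} [NormedAddCommGroup Z] [NormedSpace ℝ Z] {ι : Type*} [Fintype ι]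
  {τ : Z} {e : ι → Z} {z : Z} {g F w : Z → ℝ}

/-- The backward heat operator `∂_τ + Δ` with time direction `τ` and space directions `e i`. -/
def heatOp (τ : Z) (e : ι → Z) (f : Z → ℝ) (z : Z) : ℝ :=
  dirDeriv τ f z + laplace e f z

/-- The integrand of the left-hand side of the Carleman inequality, without the weight `e^g`. -/
def carlemanBulk (τ : Z) (e : ι → Z) (g F w : Z → ℝ) (z : Z) : ℝ :=
  (1 / 2) * heatOp τ e F z * w z ^ 2 + 2 * hessForm e g w w z

/-- The integrand of the boundary terms of the Carleman inequality, without the weight `e^g`. -/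
def carlemanEnergy (e : ι → Z) (F w : Z → ℝ) (z : Z) : ℝ :=
  gradInner e w w z + (1 / 2) * F z * w z ^ 2

/-- The skew-adjoint part, applied to `w`, of the backward heat operator with respect to the
weight `e^g`, for `F = ∂_τ g - Δg - |∇g|²`. -/
def heatSkewPart (τ : Z) (e : ι → Z) (g F w : Z → ℝ) (z : Z) : ℝ :=
  dirDeriv τ w z + (1 / 2) * F z * w z - gradInner e g w z

/-- The space vector field whose divergence is discarded in the Carleman inequality; it is the
combination `e^g (2 A w ∇w - ½ w² ∇F + (|∇w|² + ½ F w²) ∇g)`, where `A` is `heatSkewPart`. -/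
def carlemanFlux (τ : Z) (e : ι → Z) (g F w : Z → ℝ) (i : ι) (z : Z) : ℝ :=
  exp (g z) * (2 * heatSkewPart τ e g F w z * dirDeriv (e i) w z)
    + exp (g z) * (-(1 / 2) * w z ^ 2 * dirDeriv (e i) F z)
    + exp (g z) * (carlemanEnergy e F w z * dirDeriv (e i) g z)

@[fun_prop]
lemma continuous_heatOp (hw : ContDiff ℝ 2 w) : Continuous (heatOp τ e w) := by
  have := hw.of_le one_le_two
  unfold heatOp
  fun_prop

@[fun_prop]
lemma continuous_carlemanBulk (hg : ContDiff ℝ 2 g) (hF : ContDiff ℝ 2 F) (hw : ContDiff ℝ 2 w) :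
    Continuous (carlemanBulk τ e g F w) := by
  have := hw.of_le one_le_two
  unfold carlemanBulk
  fun_prop

@[fun_prop]
lemma contDiff_one_carlemanEnergy (hF : ContDiff ℝ 1 F) (hw : ContDiff ℝ 2 w) :
    ContDiff ℝ 1 (carlemanEnergy e F w) := by
  have := hw.of_le one_le_two
  unfold carlemanEnergy
  fun_prop

@[fun_prop]
lemma contDiff_one_heatSkewPart (hg : ContDiff ℝ 2 g) (hF : ContDiff ℝ 1 F) (hw : ContDiff ℝ 2 w) :
    ContDiff ℝ 1 (heatSkewPart τ e g F w) := by
  have := hw.of_le one_le_two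
  unfold heatSkewPart
  fun_prop

lemma contDiff_one_carlemanFlux (hg : ContDiff ℝ 2 g) (hF : ContDiff ℝ 2 F) (hw : ContDiff ℝ 2 w)
    (i : ι) : ContDiff ℝ 1 (carlemanFlux τ e g F w i) := by
  have := hg.of_le one_le_two
  have := hF.of_le one_le_two
  have := hw.of_le one_le_two
  unfold carlemanFlux
  fun_prop

lemma dirDeriv_carlemanEnergy (hF : Differentiable ℝ F) (hw : ContDiff ℝ 2 w) (v z : Z) :
    dirDeriv v (carlemanEnergy e F w) z = 2 * gradInner e (dirDeriv v w) w z
      + (1 / 2) * dirDeriv v F z * w z ^ 2 + F z * w z * dirDeriv v w z := by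
  have := hw.differentiable two_ne_zero
  unfold carlemanEnergy
  rw [dirDeriv_add (by fun_prop) (by fun_prop), dirDeriv_gradInner hw hw,
    dirDeriv_mul (by fun_prop) (by fun_prop), dirDeriv_const_mul _ (by fun_prop),
    dirDeriv_sq (by fun_prop), gradInner_comm w]
  ring

lemma gradInner_carlemanEnergy (hF : Differentiable ℝ F) (hw : ContDiff ℝ 2 w) (g : Z → ℝ)
    (z : Z) :
    gradInner e (carlemanEnergy e F w) g z = 2 * hessForm e w w g z
      + (1 / 2) * gradInner e F g z * w z ^ 2 + F z * w z * gradInner e w g z := by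
  have := hw.differentiable two_ne_zero
  have split : gradInner e (carlemanEnergy e F w) g z = gradInner e (gradInner e w w) g z
      + (1 / 2 * gradInner e F g z * w z ^ 2 + F z * w z * gradInner e w g z) := by
    unfold carlemanEnergy
    simp only [gradInner_eq_dirDeriv _ g]
    rw [dirDeriv_add (by fun_prop) (by fun_prop), dirDeriv_mul (by fun_prop) (by fun_prop),
      dirDeriv_const_mul _ (by fun_prop), dirDeriv_sq (by fun_prop)]
    ring
  rw [split, gradInner_gradInner hw hw, hessForm_comm hw g w]
  ring

lemma gradInner_heatSkewPart (hg : ContDiff ℝ 2 g) (hF : Differentiable ℝ F)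
    (hw : ContDiff ℝ 2 w) (z : Z) :
    gradInner e (heatSkewPart τ e g F w) w z = gradInner e (dirDeriv τ w) w z
      + (1 / 2) * (gradInner e F w z * w z + F z * gradInner e w w z)
      - (hessForm e g w w z + hessForm e w w g z) := by
  have := hw.differentiable two_ne_zero
  rw [← gradInner_gradInner hg hw]
  unfold heatSkewPart
  simp only [gradInner_eq_dirDeriv _ w z]
  rw [dirDeriv_sub (by fun_prop) (by fun_prop), dirDeriv_add (by fun_prop) (by fun_prop),
    dirDeriv_mul (by fun_prop) (by fun_prop), dirDeriv_const_mul _ (by fun_prop)]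
  ring

lemma sum_dirDeriv_carlemanFlux (hg : ContDiff ℝ 2 g) (hF : ContDiff ℝ 2 F)
    (hw : ContDiff ℝ 2 w) (z : Z) :
    ∑ i, dirDeriv (e i) (carlemanFlux τ e g F w i) z = exp (g z) *
      (2 * gradInner e (heatSkewPart τ e g F w) w z
        + 2 * heatSkewPart τ e g F w z * (laplace e w z + gradInner e g w z)
        - w z * gradInner e F w z - (1 / 2) * w z ^ 2 * (laplace e F z + gradInner e F g z)
        + gradInner e (carlemanEnergy e F w) g z
        + carlemanEnergy e F w z * (laplace e g z + gradInner e g g z)) := by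
  have := hg.differentiable two_ne_zero
  have := hF.differentiable two_ne_zero
  have := hw.differentiable two_ne_zero
  have hA : Differentiable ℝ (heatSkewPart τ e g F w) :=
    (contDiff_one_heatSkewPart hg (hF.of_le one_le_two) hw).differentiable one_ne_zero
  have hE : Differentiable ℝ (carlemanEnergy e F w) :=
    (contDiff_one_carlemanEnergy (hF.of_le one_le_two) hw).differentiable one_ne_zero
  have hA_grad : gradInner e (fun y => 2 * heatSkewPart τ e g F w y) w z
      = 2 * gradInner e (heatSkewPart τ e g F w) w z := by
    simp only [gradInner_eq_dirDeriv _ w, dirDeriv_const_mul _ (hA z)]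
  have hw_grad : gradInner e (fun y => -(1 / 2) * w y ^ 2) F z = -w z * gradInner e F w z := by
    rw [gradInner_comm F w, gradInner_eq_dirDeriv, dirDeriv_const_mul _ (by fun_prop),
      dirDeriv_sq (by fun_prop), gradInner_eq_dirDeriv]
    ring
  unfold carlemanFlux
  simp (disch := fun_prop) only [dirDeriv_add, Finset.sum_add_distrib]
  rw [sum_dirDeriv_exp_mul_grad (a := fun y => 2 * heatSkewPart τ e g F w y) (by fun_prop)
      (by fun_prop) hw,
    sum_dirDeriv_exp_mul_grad (a := fun y => -(1 / 2) * w y ^ 2) (by fun_prop) (by fun_prop) hF,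
    sum_dirDeriv_exp_mul_grad (by fun_prop) (by fun_prop) hg, hA_grad, hw_grad, gradInner_comm g F]
  ring

lemma carleman_identity (hg : ContDiff ℝ 2 g) (hF : ContDiff ℝ 2 F) (hw : ContDiff ℝ 2 w)
    (hFg : F z = dirDeriv τ g z - laplace e g z - gradInner e g g z) :
    carlemanBulk τ e g F w z * exp (g z)
      = (1 / 2) * (heatOp τ e w z ^ 2 * exp (g z))
        + dirDeriv τ (fun y => carlemanEnergy e F w y * exp (g y)) z
        - ∑ i, dirDeriv (e i) (carlemanFlux τ e g F w i) z
        - (1 / 2) * (heatOp τ e w z - 2 * heatSkewPart τ e g F w z) ^ 2 * exp (g z) := by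
  have := hg.differentiable two_ne_zero
  have hF' := hF.differentiable two_ne_zero
  have hE : Differentiable ℝ (carlemanEnergy e F w) :=
    (contDiff_one_carlemanEnergy (hF.of_le one_le_two) hw).differentiable one_ne_zero
  have hτ : dirDeriv τ g z = F z + laplace e g z + gradInner e g g z := by linarith
  rw [sum_dirDeriv_carlemanFlux hg hF hw, gradInner_heatSkewPart hg hF' hw,
    gradInner_carlemanEnergy hF' hw, dirDeriv_mul (by fun_prop) (by fun_prop),
    dirDeriv_carlemanEnergy hF' hw, dirDeriv_exp (by fun_prop), hτ, gradInner_comm g w]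
  unfold carlemanBulk heatOp heatSkewPart carlemanEnergy
  rw [gradInner_comm g w]
  ring

lemma carlemanBulk_mul_exp_le (hg : ContDiff ℝ 2 g) (hF : ContDiff ℝ 2 F) (hw : ContDiff ℝ 2 w)
    (hFg : F z = dirDeriv τ g z - laplace e g z - gradInner e g g z) :
    carlemanBulk τ e g F w z * exp (g z)
      ≤ (1 / 2) * (heatOp τ e w z ^ 2 * exp (g z))
        + dirDeriv τ (fun y => carlemanEnergy e F w y * exp (g y)) z
        - ∑ i, dirDeriv (e i) (carlemanFlux τ e g F w i) z := by
  rw [carleman_identity hg hF hw hFg, sub_le_self_iff]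
  positivity

lemma sum_carlemanBulk_mul_exp_le {κ : Type*} [Fintype κ] {w : κ → Z → ℝ}
    (hg : ContDiff ℝ 2 g) (hF : ContDiff ℝ 2 F) (hw : ∀ k, ContDiff ℝ 2 (w k))
    (hFg : F z = dirDeriv τ g z - laplace e g z - gradInner e g g z) :
    (∑ k, carlemanBulk τ e g F (w k) z) * exp (g z)
      ≤ (1 / 2) * ((∑ k, heatOp τ e (w k) z ^ 2) * exp (g z))
        + dirDeriv τ (fun y => (∑ k, carlemanEnergy e F (w k) y) * exp (g y)) z
        - ∑ i, dirDeriv (e i) (fun y => ∑ k, carlemanFlux τ e g F (w k) i y) z := by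
  have hM (k : κ) : Differentiable ℝ fun y => carlemanEnergy e F (w k) y * exp (g y) := by
    have := hg.of_le one_le_two
    have := hF.of_le one_le_two
    exact ContDiff.differentiable (n := 1) (by fun_prop) one_ne_zero
  have hV (k : κ) (i : ι) : Differentiable ℝ (carlemanFlux τ e g F (w k) i) :=
    (contDiff_one_carlemanFlux hg hF (hw k) i).differentiable one_ne_zero
  simp_rw [Finset.sum_mul, dirDeriv_sum fun k _ => hM k z, dirDeriv_sum fun k _ => hV k _ z]
  rw [Finset.sum_comm, Finset.mul_sum, ← Finset.sum_add_distrib, ← Finset.sum_sub_distrib]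
  exact Finset.sum_le_sum fun k _ => carlemanBulk_mul_exp_le hg hF (hw k) hFg

lemma gradInner_eq_zero_of_eventuallyEq (hw : w =ᶠ[𝓝 z] 0) (f : Z → ℝ) :
    gradInner e f w z = 0 :=
  Finset.sum_eq_zero fun i _ => by simp [(dirDeriv_eventuallyEq_zero hw (e i)).eq_of_nhds]

lemma hessForm_eq_zero_of_eventuallyEq (hw : w =ᶠ[𝓝 z] 0) (g f : Z → ℝ) :
    hessForm e g f w z = 0 :=
  Finset.sum_eq_zero fun i _ => Finset.sum_eq_zero fun j _ => by
    simp [(dirDeriv_eventuallyEq_zero hw (e j)).eq_of_nhds]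

lemma heatOp_eq_zero_of_eventuallyEq (hw : w =ᶠ[𝓝 z] 0) : heatOp τ e w z = 0 := by
  have hD := dirDeriv_eventuallyEq_zero hw
  simp [heatOp, laplace, (hD τ).eq_of_nhds,
    fun i => (dirDeriv_eventuallyEq_zero (hD (e i)) (e i)).eq_of_nhds]

lemma carlemanBulk_eq_zero_of_eventuallyEq (hw : w =ᶠ[𝓝 z] 0) :
    carlemanBulk τ e g F w z = 0 := by
  simp [carlemanBulk, hessForm_eq_zero_of_eventuallyEq hw, hw.eq_of_nhds]

lemma carlemanEnergy_eq_zero_of_eventuallyEq (hw : w =ᶠ[𝓝 z] 0) : carlemanEnergy e F w z = 0 := by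
  simp [carlemanEnergy, gradInner_eq_zero_of_eventuallyEq hw, hw.eq_of_nhds]

lemma carlemanFlux_eq_zero_of_eventuallyEq (hw : w =ᶠ[𝓝 z] 0) (i : ι) :
    carlemanFlux τ e g F w i z = 0 := by
  simp [carlemanFlux, carlemanEnergy_eq_zero_of_eventuallyEq hw, hw.eq_of_nhds,
    (dirDeriv_eventuallyEq_zero hw (e i)).eq_of_nhds]

end CarlemanIdentity

section SpaceTimeIntegrals

variable {X : Type*} [TopologicalSpace X] {K : Set X} {f : ℝ × X → ℝ}

lemma eventuallyEq_zero_of_snd_notMem (hK : IsClosed K) (hf : ∀ z : ℝ × X, z.2 ∉ K → f z = 0)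
    {z : ℝ × X} (hz : z.2 ∉ K) : f =ᶠ[𝓝 z] 0 := by
  filter_upwards [(hK.isOpen_compl.preimage continuous_snd).mem_nhds hz] with y hy using hf y hy

lemma integrable_slice_of_compact [T2Space X] [MeasurableSpace X] [OpensMeasurableSpace X]
    {μ : Measure X} [IsFiniteMeasureOnCompacts μ] (hK : IsCompact K) (hf : Continuous f)
    (hf_zero : ∀ z : ℝ × X, z.2 ∉ K → f z = 0) (t : ℝ) : Integrable (fun x => f (t, x)) μ :=
  (show Continuous fun x => f (t, x) by fun_prop).integrable_of_hasCompactSupport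
    (.intro hK fun x hx => hf_zero (t, x) hx)

lemma integrable_Icc_prod_of_compact [T2Space X] [SecondCountableTopology X] [MeasurableSpace X]
    [OpensMeasurableSpace X] {μ : Measure X} [IsFiniteMeasureOnCompacts μ] [SFinite μ]
    (hK : IsCompact K) (hf : Continuous f) (hf_zero : ∀ z : ℝ × X, z.2 ∉ K → f z = 0)
    (t₁ t₂ : ℝ) : Integrable f ((volume.restrict (Icc t₁ t₂)).prod μ) := by
  have hcompact : IntegrableOn f (Icc t₁ t₂ ×ˢ K) (volume.prod μ) :=
    hf.continuousOn.integrableOn_compact (isCompact_Icc.prod hK)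
  have hstrip : IntegrableOn f (Icc t₁ t₂ ×ˢ univ) (volume.prod μ) :=
    hcompact.of_forall_sdiff_eq_zero (measurableSet_Icc.prod .univ)
      fun z hz => hf_zero z fun hzK => hz.2 ⟨hz.1.1, hzK⟩
  rwa [IntegrableOn, ← Measure.prod_restrict, Measure.restrict_univ] at hstrip

end SpaceTimeIntegrals

section SpaceTimeDerivatives

variable {E : Type*} [NormedAddCommGroup E] [NormedSpace ℝ E] {f : ℝ × E → ℝ} {t : ℝ} {x : E}

/-- The purely spatial direction of `ℝ × E` given by `e i`. -/
def spaceDir {ι : Type*} (e : ι → E) (i : ι) : ℝ × E :=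
  (0, e i)

lemma dirDeriv_space (hf : DifferentiableAt ℝ f (t, x)) (v : E) :
    dirDeriv (0, v) f (t, x) = dirDeriv v (fun y => f (t, y)) x := by
  have h := hf.hasFDerivAt.comp x (hasFDerivAt_prodMk_right t x)
  change _ = fderiv ℝ (f ∘ fun y => (t, y)) x v
  simp [dirDeriv, h.fderiv]

lemma hasDerivAt_time (hf : DifferentiableAt ℝ f (t, x)) :
    HasDerivAt (fun s => f (s, x)) (dirDeriv (1, 0) f (t, x)) t := by
  simpa [dirDeriv, Function.comp_def] using
    (hf.hasFDerivAt.comp t (hasFDerivAt_prodMk_left t x)).hasDerivAt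

variable [MeasurableSpace E] [BorelSpace E] [FiniteDimensional ℝ E] {μ : Measure E} {K : Set E}

lemma integral_dirDeriv_eq_zero [μ.IsAddHaarMeasure] {f : E → ℝ} (hf : ContDiff ℝ 1 f)
    (hf_supp : HasCompactSupport f) (v : E) : ∫ x, dirDeriv v f x ∂μ = 0 := by
  have hint : Integrable (fun x => fderiv ℝ f x v) μ :=
    (continuous_dirDeriv hf (v := v)).integrable_of_hasCompactSupport (hf_supp.fderiv_apply ℝ v)
  have hparts := integral_mul_fderiv_eq_neg_fderiv_mul_of_integrable (μ := μ) (f := fun _ => 1)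
    (g := f) (v := v) (by simp) (by simpa using hint)
    (by simpa using hf.continuous.integrable_of_hasCompactSupport hf_supp) (by simp)
    (fun x _ => hf.differentiable one_ne_zero x)
  simpa [dirDeriv] using hparts

lemma integral_dirDeriv_space_eq_zero [μ.IsAddHaarMeasure] (hf : ContDiff ℝ 1 f)
    (hK : IsCompact K) (hf_zero : ∀ z : ℝ × E, z.2 ∉ K → f z = 0) (v : E) (t : ℝ) :
    ∫ x, dirDeriv (0, v) f (t, x) ∂μ = 0 := by
  simp_rw [fun x => dirDeriv_space (hf.differentiable one_ne_zero (t, x)) v]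
  exact integral_dirDeriv_eq_zero (by fun_prop) (.intro hK fun x hx => hf_zero (t, x) hx) v

lemma integral_dirDeriv_time [IsFiniteMeasureOnCompacts μ] [SFinite μ] (hf : ContDiff ℝ 1 f)
    (hK : IsCompact K) (hf_zero : ∀ z : ℝ × E, z.2 ∉ K → f z = 0) {t₁ t₂ : ℝ} (ht : t₁ ≤ t₂) :
    ∫ t in Icc t₁ t₂, ∫ x, dirDeriv (1, 0) f (t, x) ∂μ
      = (∫ x, f (t₂, x) ∂μ) - ∫ x, f (t₁, x) ∂μ := by
  have hint := integrable_Icc_prod_of_compact (μ := μ) hK (continuous_dirDeriv hf (v := (1, 0)))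
    (fun z hz => (dirDeriv_eventuallyEq_zero
      (eventuallyEq_zero_of_snd_notMem hK.isClosed hf_zero hz) _).eq_of_nhds) t₁ t₂
  have hslice (t : ℝ) := integrable_slice_of_compact (μ := μ) hK hf.continuous hf_zero t
  rw [integral_integral_swap (f := fun t x => dirDeriv (1, 0) f (t, x)) hint,
    ← integral_sub (hslice t₂) (hslice t₁)]
  refine integral_congr_ae (.of_forall fun x => ?_)
  dsimp only
  rw [integral_Icc_eq_integral_Ioc, ← intervalIntegral.integral_of_le ht]
  refine intervalIntegral.integral_eq_sub_of_hasDerivAt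
    (fun t _ => hasDerivAt_time (hf.differentiable one_ne_zero (t, x))) ?_
  exact ((continuous_dirDeriv hf).comp (by fun_prop)).intervalIntegrable _ _

lemma integral_le_add_of_le_time_sub_div [μ.IsAddHaarMeasure] {ι : Type*} [Fintype ι] {e : ι → E}
    {P Q M : ℝ × E → ℝ} {V : ι → ℝ × E → ℝ} (hP : Continuous P) (hQ : Continuous Q)
    (hM : ContDiff ℝ 1 M) (hV : ∀ i, ContDiff ℝ 1 (V i)) (hK : IsCompact K)
    (hP_zero : ∀ z : ℝ × E, z.2 ∉ K → P z = 0) (hQ_zero : ∀ z : ℝ × E, z.2 ∉ K → Q z = 0)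
    (hM_zero : ∀ z : ℝ × E, z.2 ∉ K → M z = 0)
    (hV_zero : ∀ i, ∀ z : ℝ × E, z.2 ∉ K → V i z = 0)
    (hle : ∀ z, P z ≤ Q z + dirDeriv (1, 0) M z - ∑ i, dirDeriv (spaceDir e i) (V i) z)
    {t₁ t₂ : ℝ} (ht : t₁ ≤ t₂) :
    ∫ t in Icc t₁ t₂, ∫ x, P (t, x) ∂μ ≤ (∫ t in Icc t₁ t₂, ∫ x, Q (t, x) ∂μ)
      + ((∫ x, M (t₂, x) ∂μ) - ∫ x, M (t₁, x) ∂μ) := by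
  have zero_of {f : ℝ × E → ℝ} (hf : ∀ z : ℝ × E, z.2 ∉ K → f z = 0) (v z : ℝ × E)
      (hz : z.2 ∉ K) : dirDeriv v f z = 0 :=
    (dirDeriv_eventuallyEq_zero
      (eventuallyEq_zero_of_snd_notMem hK.isClosed hf hz) v).eq_of_nhds
  have hPi := integrable_Icc_prod_of_compact (μ := μ) hK hP hP_zero t₁ t₂
  have hQi := integrable_Icc_prod_of_compact (μ := μ) hK hQ hQ_zero t₁ t₂
  have hMi := integrable_Icc_prod_of_compact (μ := μ) hK (continuous_dirDeriv hM)
    (zero_of hM_zero (1, 0)) t₁ t₂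
  have hVi (i : ι) := integrable_Icc_prod_of_compact (μ := μ) hK (continuous_dirDeriv (hV i))
    (zero_of (hV_zero i) (spaceDir e i)) t₁ t₂
  have hdiv : ∫ z, ∑ i, dirDeriv (spaceDir e i) (V i) z ∂(volume.restrict (Icc t₁ t₂)).prod μ
      = 0 := by
    rw [integral_finsetSum _ fun i _ => hVi i]
    refine Finset.sum_eq_zero fun i _ => ?_
    rw [integral_prod _ (hVi i)]
    simp [spaceDir, integral_dirDeriv_space_eq_zero (hV i) hK (hV_zero i)]
  have hmono := integral_mono hPi
    ((hQi.add hMi).sub (integrable_finsetSum Finset.univ fun i _ => hVi i)) hle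
  rwa [integral_sub' (hQi.add hMi) (integrable_finsetSum _ fun i _ => hVi i),
    integral_add' hQi hMi, hdiv, sub_zero, integral_prod _ hPi, integral_prod _ hQi,
    integral_prod _ hMi, integral_dirDeriv_time hM hK hM_zero ht] at hmono

theorem integral_sum_carlemanBulk_le [μ.IsAddHaarMeasure] {ι κ : Type*} [Fintype ι] [Fintype κ]
    {e : ι → E} {g F : ℝ × E → ℝ} {w : κ → ℝ × E → ℝ} (hg : ContDiff ℝ 2 g)
    (hF : ContDiff ℝ 2 F) (hw : ∀ k, ContDiff ℝ 2 (w k))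
    (hFg : ∀ z, F z
      = dirDeriv (1, 0) g z - laplace (spaceDir e) g z - gradInner (spaceDir e) g g z)
    (hK : IsCompact K) (hw_zero : ∀ k, ∀ z : ℝ × E, z.2 ∉ K → w k z = 0)
    {t₁ t₂ : ℝ} (ht : t₁ ≤ t₂) :
    ∫ t in Icc t₁ t₂, ∫ x,
          (∑ k, carlemanBulk (1, 0) (spaceDir e) g F (w k) (t, x)) * exp (g (t, x)) ∂μ
      ≤ (1 / 2) * (∫ t in Icc t₁ t₂, ∫ x,
          (∑ k, heatOp (1, 0) (spaceDir e) (w k) (t, x) ^ 2) * exp (g (t, x)) ∂μ)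
        + ((∫ x, (∑ k, carlemanEnergy (spaceDir e) F (w k) (t₂, x)) * exp (g (t₂, x)) ∂μ)
          - ∫ x, (∑ k, carlemanEnergy (spaceDir e) F (w k) (t₁, x)) * exp (g (t₁, x)) ∂μ) := by
  have := hg.of_le one_le_two
  have := hF.of_le one_le_two
  have hw_near (k : κ) (z : ℝ × E) (hz : z.2 ∉ K) : w k =ᶠ[𝓝 z] 0 :=
    eventuallyEq_zero_of_snd_notMem hK.isClosed (hw_zero k) hz
  simp_rw [← integral_const_mul]
  refine integral_le_add_of_le_time_sub_div
    (P := fun z => (∑ k, carlemanBulk (1, 0) _ g F (w k) z) * exp (g z))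
    (Q := fun z => (1 / 2) * ((∑ k, heatOp (1, 0) _ (w k) z ^ 2) * exp (g z)))
    (M := fun z => (∑ k, carlemanEnergy _ F (w k) z) * exp (g z))
    (V := fun i z => ∑ k, carlemanFlux (1, 0) _ g F (w k) i z)
    (by fun_prop) (by fun_prop) (by fun_prop)
    (fun i => .sum fun k _ => contDiff_one_carlemanFlux hg hF (hw k) i) hK
    (fun z hz => ?_) (fun z hz => ?_) (fun z hz => ?_) (fun i z hz => ?_)
    (fun z => sum_carlemanBulk_mul_exp_le hg hF hw (hFg z)) ht
  · rw [Finset.sum_eq_zero fun k _ => carlemanBulk_eq_zero_of_eventuallyEq (hw_near k z hz),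
      zero_mul]
  · have hL (k : κ) : heatOp (1, 0) (spaceDir e) (w k) z = 0 :=
      heatOp_eq_zero_of_eventuallyEq (hw_near k z hz)
    simp [hL]
  · rw [Finset.sum_eq_zero fun k _ => carlemanEnergy_eq_zero_of_eventuallyEq (hw_near k z hz),
      zero_mul]
  · exact Finset.sum_eq_zero fun k _ => carlemanFlux_eq_zero_of_eventuallyEq (hw_near k z hz) i

end SpaceTimeDerivatives

section Coordinates

variable {d : ℕ} {f : ℝ → EuclideanSpace ℝ (Fin d) → ℝ} {t : ℝ} {x : EuclideanSpace ℝ (Fin d)}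

/-- The coordinate directions of space-time, in which `pdg` differentiates. -/
abbrev coordDir (d : ℕ) : Fin d → ℝ × EuclideanSpace ℝ (Fin d) :=
  spaceDir fun i => EuclideanSpace.single i 1

lemma pdg_eq_dirDeriv (hf : DifferentiableAt ℝ (fun z : ℝ × _ => f z.1 z.2) (t, x)) (i : Fin d) :
    pdg i (f t) x = dirDeriv (coordDir d i) (fun z => f z.1 z.2) (t, x) :=
  (dirDeriv_space hf _).symm

lemma pdg_pdg_eq_dirDeriv (hf : ContDiff ℝ 2 fun z : ℝ × _ => f z.1 z.2) (i j : Fin d) :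
    pdg i (pdg j (f t)) x
      = dirDeriv (coordDir d i) (dirDeriv (coordDir d j) fun z => f z.1 z.2) (t, x) := by
  rw [funext fun y => pdg_eq_dirDeriv (hf.differentiable two_ne_zero (t, y)) j]
  exact (dirDeriv_space (differentiable_dirDeriv hf (t, x)) _).symm

lemma lapg_eq_laplace (hf : ContDiff ℝ 2 fun z : ℝ × _ => f z.1 z.2) :
    lapg (f t) x = laplace (coordDir d) (fun z => f z.1 z.2) (t, x) :=
  Finset.sum_congr rfl fun i _ => pdg_pdg_eq_dirDeriv hf i i

lemma tdg_eq_dirDeriv (hf : DifferentiableAt ℝ (fun z : ℝ × _ => f z.1 z.2) (t, x)) :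
    tdg f t x = dirDeriv (1, 0) (fun z => f z.1 z.2) (t, x) :=
  (hasDerivAt_time hf).deriv

lemma bheat_eq_heatOp (hf : ContDiff ℝ 2 fun z : ℝ × _ => f z.1 z.2) :
    bheat f t x = heatOp (1, 0) (coordDir d) (fun z => f z.1 z.2) (t, x) := by
  rw [bheat, heatOp, tdg_eq_dirDeriv (hf.differentiable two_ne_zero _), lapg_eq_laplace hf]

lemma sum_pdg_sq_eq_gradInner (hf : DifferentiableAt ℝ (fun z : ℝ × _ => f z.1 z.2) (t, x)) :
    ∑ i, pdg i (f t) x ^ 2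
      = gradInner (coordDir d) (fun z => f z.1 z.2) (fun z => f z.1 z.2) (t, x) := by
  simp only [gradInner, pdg_eq_dirDeriv hf, pow_two]

variable {m : ℕ} {u : ℝ → EuclideanSpace ℝ (Fin d) → EuclideanSpace ℝ (Fin m)}
  {g F : ℝ → EuclideanSpace ℝ (Fin d) → ℝ}

lemma contDiff_heatPotential {n : WithTop ℕ∞}
    (hg : ContDiff ℝ (n + 2) fun z : ℝ × _ => g z.1 z.2)
    (hF : ∀ t x, F t x = tdg g t x - lapg (g t) x - ∑ i, pdg i (g t) x ^ 2) :
    ContDiff ℝ n fun z : ℝ × _ => F z.1 z.2 := by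
  have hg_two : ContDiff ℝ 2 fun z : ℝ × _ => g z.1 z.2 :=
    hg.of_le le_add_self
  have hD (v) := contDiff_dirDeriv (n := n + 1) (by rwa [add_assoc, one_add_one_eq_two]) v
  simp_rw [hF, tdg_eq_dirDeriv (hg_two.differentiable two_ne_zero _), lapg_eq_laplace hg_two,
    sum_pdg_sq_eq_gradInner (hg_two.differentiable two_ne_zero _)]
  refine (((hD _).of_le le_self_add).sub ?_).sub ?_
  · exact .sum fun i _ => contDiff_dirDeriv (hD _) _
  · exact .sum fun i _ => ((hD _).mul (hD _)).of_le le_self_add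

lemma bulk_eq_sum_carlemanBulk (hu : ContDiff ℝ 2 fun z : ℝ × _ => u z.1 z.2)
    (hg : ContDiff ℝ 2 fun z : ℝ × _ => g z.1 z.2)
    (hF : ContDiff ℝ 2 fun z : ℝ × _ => F z.1 z.2) (t : ℝ) (x : EuclideanSpace ℝ (Fin d)) :
    (1 / 2) * bheat F t x * ‖u t x‖ ^ 2
        + 2 * ∑ i, ∑ j, ∑ k, pdg i (pdg j (g t)) x
          * pdg i (fun y => u t y k) x * pdg j (fun y => u t y k) x
      = ∑ k, carlemanBulk (1, 0) (coordDir d) (fun z => g z.1 z.2) (fun z => F z.1 z.2)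
          (fun z => u z.1 z.2 k) (t, x) := by
  have hu_pdg (k : Fin m) (i : Fin d) := pdg_eq_dirDeriv (f := fun t x => u t x k)
    ((contDiff_euclidean.1 hu k).differentiable two_ne_zero (t, x)) i
  simp only [carlemanBulk, hessForm, Finset.sum_add_distrib, ← Finset.mul_sum,
    EuclideanSpace.real_norm_sq_eq, bheat_eq_heatOp hF, pdg_pdg_eq_dirDeriv hg, hu_pdg]
  congr 2
  rw [Finset.sum_comm_cycle]

lemma energy_eq_sum_carlemanEnergy (hu : ContDiff ℝ 1 fun z : ℝ × _ => u z.1 z.2)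
    (F : ℝ → EuclideanSpace ℝ (Fin d) → ℝ) (t : ℝ) (x : EuclideanSpace ℝ (Fin d)) :
    (∑ i, ∑ k, pdg i (fun y => u t y k) x ^ 2) + (1 / 2) * F t x * ‖u t x‖ ^ 2
      = ∑ k, carlemanEnergy (coordDir d) (fun z => F z.1 z.2) (fun z => u z.1 z.2 k) (t, x) := by
  have hu_grad (k : Fin m) := sum_pdg_sq_eq_gradInner (f := fun t x => u t x k)
    ((contDiff_euclidean.1 hu k).differentiable one_ne_zero (t, x))
  rw [Finset.sum_comm]
  simp only [carlemanEnergy, Finset.sum_add_distrib, ← Finset.mul_sum,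
    EuclideanSpace.real_norm_sq_eq, hu_grad]

end Coordinates

theorem statement15_general (d m : ℕ) (t₁ t₂ : ℝ) (ht : t₁ ≤ t₂)
    (u : ℝ → EuclideanSpace ℝ (Fin d) → EuclideanSpace ℝ (Fin m))
    (g : ℝ → EuclideanSpace ℝ (Fin d) → ℝ)
    (hu : ContDiff ℝ 2 fun z : ℝ × EuclideanSpace ℝ (Fin d) => u z.1 z.2)
    (hg : ContDiff ℝ 2 fun z : ℝ × EuclideanSpace ℝ (Fin d) => g z.1 z.2)
    (hsupp : ∃ K : Set (EuclideanSpace ℝ (Fin d)), IsCompact K ∧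
      ∀ (t : ℝ) (x : EuclideanSpace ℝ (Fin d)), x ∉ K → u t x = 0)
    (F : ℝ → EuclideanSpace ℝ (Fin d) → ℝ)
    (hF : ∀ t x, F t x = tdg g t x - lapg (g t) x - ∑ i, (pdg i (g t) x) ^ 2)
    (hF_contDiff : ContDiff ℝ 2 fun z : ℝ × EuclideanSpace ℝ (Fin d) => F z.1 z.2) :
    (∫ t in Icc t₁ t₂, ∫ x,
        ((1/2) * bheat F t x * ‖u t x‖ ^ 2
          + 2 * ∑ i, ∑ j, ∑ k, pdg i (pdg j (g t)) x
              * pdg i (fun y => u t y k) x * pdg j (fun y => u t y k) x)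
          * Real.exp (g t x))
      ≤ (1/2) * (∫ t in Icc t₁ t₂, ∫ x,
            (∑ k, (bheat (fun s y => u s y k) t x) ^ 2) * Real.exp (g t x))
        + ((∫ x, ((∑ i, ∑ k, (pdg i (fun y => u t₂ y k) x) ^ 2)
              + (1/2) * F t₂ x * ‖u t₂ x‖ ^ 2) * Real.exp (g t₂ x))
          - (∫ x, ((∑ i, ∑ k, (pdg i (fun y => u t₁ y k) x) ^ 2)
              + (1/2) * F t₁ x * ‖u t₁ x‖ ^ 2) * Real.exp (g t₁ x))) := by
  obtain ⟨K, hK, hu_zero⟩ := hsupp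
  have huk := contDiff_euclidean.1 hu
  have hu_heat (k t x) := bheat_eq_heatOp (f := fun t x => u t x k) (t := t) (x := x) (huk k)
  simp_rw [bulk_eq_sum_carlemanBulk hu hg hF_contDiff, hu_heat,
    energy_eq_sum_carlemanEnergy (hu.of_le one_le_two)]
  refine integral_sum_carlemanBulk_le hg hF_contDiff huk (fun z => ?_) hK
    (fun k z hz => by simp [hu_zero z.1 z.2 hz]) ht
  rw [hF, tdg_eq_dirDeriv (hg.differentiable two_ne_zero _), lapg_eq_laplace hg,
    sum_pdg_sq_eq_gradInner (hg.differentiable two_ne_zero _)]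

/-- General Carleman inequality for the backward heat operator
`L = ∂ₜ + Δ`: with `F := ∂ₜ g - Δg - |∇g|²`,
`∫∫ ((1/2)(LF)|u|² + 2 Hess_g(∇u,∇u)) e^g ≤ (1/2)∫∫ |Lu|² e^g + [∫ (|∇u|² + (1/2)F|u|²) e^g]_{t₁}^{t₂}`. -/
theorem statement15 (d m : ℕ) (hd : 1 ≤ d) (hm : 1 ≤ m) (t₁ t₂ : ℝ) (ht : t₁ < t₂)
    (u : ℝ → EuclideanSpace ℝ (Fin d) → EuclideanSpace ℝ (Fin m))
    (g : ℝ → EuclideanSpace ℝ (Fin d) → ℝ)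
    (hu : ContDiff ℝ (⊤ : ℕ∞) (fun z : ℝ × EuclideanSpace ℝ (Fin d) => u z.1 z.2))
    (hg : ContDiff ℝ (⊤ : ℕ∞) (fun z : ℝ × EuclideanSpace ℝ (Fin d) => g z.1 z.2))
    (hsupp : ∃ K : Set (EuclideanSpace ℝ (Fin d)), IsCompact K ∧
      ∀ (t : ℝ) (x : EuclideanSpace ℝ (Fin d)), x ∉ K → u t x = 0)
    (F : ℝ → EuclideanSpace ℝ (Fin d) → ℝ)
    (hF : ∀ t x, F t x = tdg g t x - lapg (g t) x - ∑ i, (pdg i (g t) x) ^ 2) :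
    (∫ t in Icc t₁ t₂, ∫ x,
        ((1/2) * bheat F t x * ‖u t x‖ ^ 2
          + 2 * ∑ i, ∑ j, ∑ k, pdg i (pdg j (g t)) x
              * pdg i (fun y => u t y k) x * pdg j (fun y => u t y k) x)
          * Real.exp (g t x))
      ≤ (1/2) * (∫ t in Icc t₁ t₂, ∫ x,
            (∑ k, (bheat (fun s y => u s y k) t x) ^ 2) * Real.exp (g t x))
        + ((∫ x, ((∑ i, ∑ k, (pdg i (fun y => u t₂ y k) x) ^ 2)
              + (1/2) * F t₂ x * ‖u t₂ x‖ ^ 2) * Real.exp (g t₂ x))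
          - (∫ x, ((∑ i, ∑ k, (pdg i (fun y => u t₁ y k) x) ^ 2)
              + (1/2) * F t₁ x * ‖u t₁ x‖ ^ 2) * Real.exp (g t₁ x))) :=
  statement15_general d m t₁ t₂ ht.le u g (mod_cast contDiff_infty.1 hu 2)
    (mod_cast contDiff_infty.1 hg 2) hsupp F hF
    (contDiff_heatPotential (mod_cast contDiff_infty.1 hg (2 + 2)) hF)
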